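/- There exists a constant C > 0 such that for every smooth compactly supported vector field u : ℝ³ → ℝ³ one has ‖(u·∇)u‖_{L²(ℝ³)} + ‖∇((u·∇)u)‖_{L²(ℝ³)} ≤ C · (‖∇u‖_{L²(ℝ³)} + ‖∇²u‖_{L²(ℝ³)})², where (u·∇)u is the vector field with components ∑_{k=1}^{3} u^k ∂_k u^j, ‖∇v‖_{L²}² := ∑_{i,j} ∫ (∂_i v^j)² dx, and ‖∇²u‖_{L²}² := ∑_{i,j,k} ∫ (∂_i ∂_j u^k)² dx. -/

import Mathlib

/-!
The Leibniz rule `D((u·∇)v) = Dv ∘ Du + D²v(·, u)` and Hölder's inequality bound `(u·∇)v` in `H¹` by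
`‖Dv‖_{L⁴} ‖Du‖_{L⁴} + ‖Dv‖_{H¹} ‖u‖_{L^∞}`. In dimension three the Sobolev embedding puts
functions of `H¹` into `L⁶`, hence by interpolation with `L²` into `L⁴`, which controls the first
term. It also puts both `u` and `Du` into `L⁶` with norms at most a multiple of `‖Du‖_{H¹}`; since
`6 > 3`, Morrey's inequality `‖u‖_{L^∞} ≲ ‖u‖_{L⁶} + ‖Du‖_{L⁶}` controls the second. The latter is
proved by averaging the fundamental theorem of calculus along the segments from `x` to the points of
the unit ball around it. This argument needs no coordinates; the norms built from partial
derivatives are equivalent to those built from Fréchet derivatives.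
-/

open MeasureTheory

/-- Partial derivative `∂ᵢ f` of a scalar function on `ℝ³`. -/
noncomputable def pd (i : Fin 3) (f : (Fin 3 → ℝ) → ℝ) (x : Fin 3 → ℝ) : ℝ :=
  fderiv ℝ f x (Pi.single i 1)

open Metric Module Set
open scoped ENNReal NNReal

section Interpolation

variable {α F : Type*} {m : MeasurableSpace α} {μ : Measure α} [NormedAddCommGroup F]

lemma eLpNorm_le_max_of_le_of_le {p q r : ℝ≥0∞} {f : α → F} (hf : AEStronglyMeasurable f μ)
    (hp : p ≠ 0) (hpq : p ≤ q) (hqr : q ≤ r) (hr : r ≠ ∞) :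
    eLpNorm f q μ ≤ max (eLpNorm f p μ) (eLpNorm f r μ) := by
  set M := max (eLpNorm f p μ) (eLpNorm f r μ)
  have hq : q ≠ 0 := (hp.bot_lt.trans_le hpq).ne'
  have hq' : q ≠ ∞ := ne_top_of_le_ne_top hr hqr
  have hp' : p ≠ ∞ := ne_top_of_le_ne_top hq' hpq
  have hr' : r ≠ 0 := (hq.bot_lt.trans_le hqr).ne'
  have lintegral_le {s : ℝ≥0∞} (hs : s ≠ 0) (hs' : s ≠ ∞) (h : eLpNorm f s μ ≤ M) :
      ∫⁻ x, ‖f x‖ₑ ^ s.toReal ∂μ ≤ M ^ s.toReal := by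
    rw [lintegral_rpow_enorm_eq_rpow_eLpNorm' (ENNReal.toReal_pos hs hs'),
      ← eLpNorm_eq_eLpNorm' hs hs']
    gcongr
  obtain ⟨a, b, ha, hb, hab, hq_eq⟩ : q.toReal ∈ segment ℝ p.toReal r.toReal := by
    rw [segment_eq_Icc (ENNReal.toReal_mono hr (hpq.trans hqr))]
    exact ⟨ENNReal.toReal_mono hq' hpq, ENNReal.toReal_mono hr hqr⟩
  have rpow_q (z : ℝ≥0∞) : z ^ q.toReal = (z ^ p.toReal) ^ a * (z ^ r.toReal) ^ b := by
    rw [← ENNReal.rpow_mul, ← ENNReal.rpow_mul, ← ENNReal.rpow_add_of_nonneg _ _ (by positivity)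
      (by positivity), ← hq_eq, smul_eq_mul, smul_eq_mul, mul_comm a, mul_comm b]
  rw [eLpNorm_eq_eLpNorm' hq hq', ← ENNReal.rpow_le_rpow_iff (ENNReal.toReal_pos hq hq'),
    ← lintegral_rpow_enorm_eq_rpow_eLpNorm' (ENNReal.toReal_pos hq hq')]
  calc ∫⁻ x, ‖f x‖ₑ ^ q.toReal ∂μ
      = ∫⁻ x, (‖f x‖ₑ ^ p.toReal) ^ a * (‖f x‖ₑ ^ r.toReal) ^ b ∂μ := by simp only [rpow_q]
    _ ≤ (∫⁻ x, ‖f x‖ₑ ^ p.toReal ∂μ) ^ a * (∫⁻ x, ‖f x‖ₑ ^ r.toReal ∂μ) ^ b :=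
        ENNReal.lintegral_mul_norm_pow_le (hf.enorm.pow_const _) (hf.enorm.pow_const _) ha hb hab
    _ ≤ (M ^ p.toReal) ^ a * (M ^ r.toReal) ^ b := by
        gcongr
        · exact lintegral_le hp hp' (le_max_left _ _)
        · exact lintegral_le hr' hr (le_max_right _ _)
    _ = M ^ q.toReal := (rpow_q M).symm

end Interpolation

section Morrey

lemma lintegral_Ioc_rpow_lt_top {s : ℝ} (hs : -1 < s) :
    ∫⁻ t in Ioc (0 : ℝ) 1, ENNReal.ofReal (t ^ s) < ∞ := by
  have h := intervalIntegral.intervalIntegrable_rpow' (a := 0) (b := 1) hs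
  rw [intervalIntegrable_iff_integrableOn_Ioc_of_le zero_le_one] at h
  exact h.lintegral_lt_top

variable {E F : Type*} [NormedAddCommGroup E] [NormedSpace ℝ E] [NormedAddCommGroup F]

lemma enorm_le_enorm_add_lintegral_fderiv [NormedSpace ℝ F] {f : E → F} (hf : ContDiff ℝ 1 f)
    (x : E) {y : E} (hy : ‖y‖ ≤ 1) :
    ‖f x‖ₑ ≤ ‖f (x + y)‖ₑ + ∫⁻ t in Ioc (0 : ℝ) 1, ‖fderiv ℝ f (x + t • y)‖ₑ := by
  have hy' : ‖y‖ₑ ≤ 1 := by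
    rwa [← ofReal_norm, ENNReal.ofReal_le_one]
  have deriv_le (t : ℝ) : ‖deriv (fun s : ℝ ↦ f (x + s • y)) t‖ₑ ≤ ‖fderiv ℝ f (x + t • y)‖ₑ := by
    have h_line : HasDerivAt (fun s : ℝ ↦ x + s • y) y t := by
      simpa using ((hasDerivAt_id t).smul_const y).const_add x
    have h_comp : HasDerivAt (fun s : ℝ ↦ f (x + s • y)) (fderiv ℝ f (x + t • y) y) t :=
      (hf.differentiable one_ne_zero _).hasFDerivAt.comp_hasDerivAt t h_line
    rw [h_comp.deriv]
    calc ‖fderiv ℝ f (x + t • y) y‖ₑ ≤ ‖fderiv ℝ f (x + t • y)‖ₑ * ‖y‖ₑ :=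
          ContinuousLinearMap.le_opENorm _ _
      _ ≤ ‖fderiv ℝ f (x + t • y)‖ₑ := mul_le_of_le_one_right' hy'
  have enorm_sub_le_lintegral :
      ‖f (x + y) - f x‖ₑ ≤ ∫⁻ t in Ioc (0 : ℝ) 1, ‖fderiv ℝ f (x + t • y)‖ₑ := by
    have h_path : ContDiff ℝ 1 (fun s : ℝ ↦ f (x + s • y)) := by fun_prop
    have h_ftc := enorm_sub_le_lintegral_deriv_of_contDiffOn_Icc h_path.contDiffOn zero_le_one
    rw [one_smul, zero_smul, add_zero, ← restrict_Ioc_eq_restrict_Icc] at h_ftc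
    exact h_ftc.trans (lintegral_mono deriv_le)
  calc ‖f x‖ₑ = ‖f (x + y) - (f (x + y) - f x)‖ₑ := by rw [sub_sub_cancel]
    _ ≤ ‖f (x + y)‖ₑ + ‖f (x + y) - f x‖ₑ := enorm_sub_le
    _ ≤ _ := by gcongr

variable [FiniteDimensional ℝ E] [MeasurableSpace E] [BorelSpace E]
  (μ : Measure E) [μ.IsAddHaarMeasure]

lemma eLpNorm_comp_add_smul (f : E → F) (x : E) {t : ℝ} (ht : t ≠ 0) {p : ℝ≥0∞} (hp : p ≠ ∞) :
    eLpNorm (fun y ↦ f (x + t • y)) p μ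
      = ENNReal.ofReal |(t ^ finrank ℝ E)⁻¹| ^ (1 / p).toReal * eLpNorm f p μ := by
  let e : E ≃ₜ E := (Homeomorph.smulOfNeZero t ht).trans (Homeomorph.addLeft x)
  have map_e : μ.map e = ENNReal.ofReal |(t ^ finrank ℝ E)⁻¹| • μ := by
    rw [show ⇑e = (x + ·) ∘ (t • ·) from rfl, ← Measure.map_map (by fun_prop) (by fun_prop),
      Measure.map_addHaar_smul μ ht, Measure.map_smul, map_add_left_eq_self]
  rw [← smul_eq_mul, ← eLpNorm_smul_measure_of_ne_top hp, ← map_e,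
    e.measurableEmbedding.eLpNorm_map_measure]
  rfl

lemma setLIntegral_enorm_comp_add_smul_le {f : E → F} (hf : Continuous f) (x : E) {t : ℝ}
    (ht : 0 < t) {p : ℝ≥0∞} (hp : 1 ≤ p) (hp' : p ≠ ∞) (s : Set E) :
    ∫⁻ y in s, ‖f (x + t • y)‖ₑ ∂μ
      ≤ ENNReal.ofReal (t ^ (-(finrank ℝ E / p.toReal))) * eLpNorm f p μ
        * μ s ^ (1 - 1 / p.toReal) := by
  have dilation_factor : ENNReal.ofReal |(t ^ finrank ℝ E)⁻¹| ^ (1 / p).toReal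
      = ENNReal.ofReal (t ^ (-(finrank ℝ E / p.toReal))) := by
    rw [ENNReal.ofReal_rpow_of_nonneg (abs_nonneg _) ENNReal.toReal_nonneg,
      abs_of_pos (by positivity), ← Real.rpow_natCast, ← Real.rpow_neg ht.le,
      ← Real.rpow_mul ht.le, one_div, ENNReal.toReal_inv, neg_mul, div_eq_mul_inv]
  have h_cont : Continuous fun y ↦ f (x + t • y) := by fun_prop
  calc ∫⁻ y in s, ‖f (x + t • y)‖ₑ ∂μ
      = eLpNorm (fun y ↦ f (x + t • y)) 1 (μ.restrict s) := eLpNorm_one_eq_lintegral_enorm.symm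
    _ ≤ eLpNorm (fun y ↦ f (x + t • y)) p (μ.restrict s) * μ s ^ (1 - 1 / p.toReal) := by
        simpa using eLpNorm_le_eLpNorm_mul_rpow_measure_univ hp
          (h_cont.aestronglyMeasurable (μ := μ.restrict s))
    _ ≤ eLpNorm (fun y ↦ f (x + t • y)) p μ * μ s ^ (1 - 1 / p.toReal) := by
        gcongr
        exact Measure.restrict_le_self
    _ = _ := by rw [eLpNorm_comp_add_smul μ f x ht.ne' hp', dilation_factor]

lemma measure_unitBall_mul_enorm_le [NormedSpace ℝ F] {f : E → F} (hf : ContDiff ℝ 1 f) (x : E) :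
    μ (ball 0 1) * ‖f x‖ₑ ≤ ∫⁻ y in ball 0 1, ‖f (x + y)‖ₑ ∂μ
      + ∫⁻ t in Ioc (0 : ℝ) 1, ∫⁻ y in ball 0 1, ‖fderiv ℝ f (x + t • y)‖ₑ ∂μ := by
  have h_cont : Continuous f := hf.continuous
  calc μ (ball 0 1) * ‖f x‖ₑ = ∫⁻ _ in ball (0 : E) 1, ‖f x‖ₑ ∂μ := by
        rw [setLIntegral_const, mul_comm]
    _ ≤ ∫⁻ y in ball (0 : E) 1, (‖f (x + y)‖ₑ
          + ∫⁻ t in Ioc (0 : ℝ) 1, ‖fderiv ℝ f (x + t • y)‖ₑ) ∂μ :=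
        setLIntegral_mono' measurableSet_ball fun y hy ↦
          enorm_le_enorm_add_lintegral_fderiv hf x (mem_ball_zero_iff.1 hy).le
    _ = ∫⁻ y in ball (0 : E) 1, ‖f (x + y)‖ₑ ∂μ
          + ∫⁻ y in ball (0 : E) 1, (∫⁻ t in Ioc (0 : ℝ) 1, ‖fderiv ℝ f (x + t • y)‖ₑ) ∂μ :=
        lintegral_add_left (h_cont.comp (continuous_const_add x)).enorm.measurable _
    _ = _ := by
        congr 1
        refine lintegral_lintegral_swap (Continuous.aemeasurable ?_)
        exact ((hf.continuous_fderiv one_ne_zero).comp (by fun_prop :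
          Continuous fun q : E × ℝ ↦ x + q.2 • q.1)).enorm

theorem exists_enorm_le_eLpNorm_add_eLpNorm_fderiv [NormedSpace ℝ F] {p : ℝ≥0∞} (hp : 1 ≤ p)
    (hp' : p ≠ ∞) (hEp : finrank ℝ E < p) :
    ∃ C : ℝ≥0, ∀ f : E → F, ContDiff ℝ 1 f → ∀ x,
      ‖f x‖ₑ ≤ C * (eLpNorm f p μ + eLpNorm (fderiv ℝ f) p μ) := by
  set V := μ (ball (0 : E) 1)
  have hV : V ≠ 0 := (measure_ball_pos μ 0 one_pos).ne'
  have hV' : V ≠ ∞ := measure_ball_lt_top.ne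
  set V' := V ^ (1 - 1 / p.toReal)
  have hp_pos : 0 < p.toReal := ENNReal.toReal_pos (one_pos.trans_le hp).ne' hp'
  set K := ∫⁻ t in Ioc (0 : ℝ) 1, ENNReal.ofReal (t ^ (-(finrank ℝ E / p.toReal)))
  have hK : K ≠ ∞ := by
    refine (lintegral_Ioc_rpow_lt_top (neg_lt_neg ?_)).ne
    rw [div_lt_one hp_pos]
    simpa using (ENNReal.toReal_lt_toReal (by simp) hp').2 hEp
  have hC : V⁻¹ * ((1 + K) * V') ≠ ∞ := by finiteness
  refine ⟨(V⁻¹ * ((1 + K) * V')).toNNReal, fun f hf x ↦ ?_⟩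
  have value_le : ∫⁻ y in ball 0 1, ‖f (x + y)‖ₑ ∂μ ≤ eLpNorm f p μ * V' := by
    simpa [V', V] using
      setLIntegral_enorm_comp_add_smul_le μ hf.continuous x one_pos hp hp' (ball 0 1)
  have derivative_le : ∫⁻ t in Ioc (0 : ℝ) 1, ∫⁻ y in ball 0 1, ‖fderiv ℝ f (x + t • y)‖ₑ ∂μ
      ≤ K * (eLpNorm (fderiv ℝ f) p μ * V') := by
    rw [← lintegral_mul_const _ (by fun_prop)]
    refine setLIntegral_mono' measurableSet_Ioc fun t ht ↦ ?_
    rw [← mul_assoc]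
    exact setLIntegral_enorm_comp_add_smul_le μ (hf.continuous_fderiv one_ne_zero) x ht.1 hp hp'
      (ball 0 1)
  rw [ENNReal.coe_toNNReal hC, mul_assoc, ← ENNReal.mul_le_iff_le_inv hV hV']
  calc V * ‖f x‖ₑ ≤ eLpNorm f p μ * V' + K * (eLpNorm (fderiv ℝ f) p μ * V') :=
        (measure_unitBall_mul_enorm_le μ hf x).trans (add_le_add value_le derivative_le)
    _ ≤ eLpNorm f p μ * V' + K * (eLpNorm (fderiv ℝ f) p μ * V')
          + (K * (eLpNorm f p μ * V') + eLpNorm (fderiv ℝ f) p μ * V') := le_self_add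
    _ = (1 + K) * V' * (eLpNorm f p μ + eLpNorm (fderiv ℝ f) p μ) := by ring

end Morrey

section Convection

variable {E F : Type*} [NormedAddCommGroup E] [NormedSpace ℝ E] [NormedAddCommGroup F]
  [NormedSpace ℝ F]

lemma norm_fderiv_fderiv_apply_le {u : E → E} {v : E → F} {x : E} (hu : DifferentiableAt ℝ u x)
    (hv : DifferentiableAt ℝ (fderiv ℝ v) x) :
    ‖fderiv ℝ (fun y ↦ fderiv ℝ v y (u y)) x‖
      ≤ ‖fderiv ℝ v x‖ * ‖fderiv ℝ u x‖ + ‖fderiv ℝ (fderiv ℝ v) x‖ * ‖u x‖ := by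
  rw [fderiv_clm_apply hv hu]
  refine (norm_add_le _ _).trans (add_le_add (ContinuousLinearMap.opNorm_comp_le _ _) ?_)
  simpa using (fderiv ℝ (fderiv ℝ v) x).flip.le_opNorm (u x)

lemma eLpNorm_clm_apply_le {α : Type*} {m : MeasurableSpace α} {μ : Measure α} {p : ℝ≥0∞}
    {A : α → E →L[ℝ] F} (hA : AEStronglyMeasurable A μ) (u : α → E) :
    eLpNorm (fun x ↦ A x (u x)) p μ ≤ eLpNorm A p μ * eLpNorm u ∞ μ := by
  simpa using eLpNorm_le_eLpNorm_mul_eLpNorm_top p hA u (fun L y ↦ L y) 1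
    (.of_forall fun x ↦ by simpa using (A x).le_opNNNorm (u x))

variable [MeasurableSpace E]

/-- The norm `‖f‖_{L²} + ‖∇f‖_{L²}` of `f` in `H¹`, for the operator norm of the Fréchet derivative
and with values in `ℝ≥0∞`. -/
noncomputable def eH1Norm (f : E → F) (μ : Measure E) : ℝ≥0∞ :=
  eLpNorm f 2 μ + eLpNorm (fderiv ℝ f) 2 μ

lemma eLpNorm_le_eH1Norm (f : E → F) (μ : Measure E) : eLpNorm f 2 μ ≤ eH1Norm f μ :=
  le_self_add

lemma eLpNorm_fderiv_le_eH1Norm (f : E → F) (μ : Measure E) :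
    eLpNorm (fderiv ℝ f) 2 μ ≤ eH1Norm f μ :=
  le_add_self

variable [BorelSpace E] [FiniteDimensional ℝ E]

lemma eLpNorm_fderiv_fderiv_apply_le {p q r : ℝ≥0∞} [ENNReal.HolderTriple p q r] (hr : 1 ≤ r)
    (μ : Measure E) {u : E → E} {v : E → F} (hu : ContDiff ℝ 1 u) (hv : ContDiff ℝ 2 v) :
    eLpNorm (fderiv ℝ fun x ↦ fderiv ℝ v x (u x)) r μ
      ≤ eLpNorm (fderiv ℝ v) p μ * eLpNorm (fderiv ℝ u) q μ
        + eLpNorm (fderiv ℝ (fderiv ℝ v)) r μ * eLpNorm u ∞ μ := by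
  have hv' : ContDiff ℝ 1 (fderiv ℝ v) := hv.fderiv_right le_rfl
  have u_cont := hu.continuous
  have Du_cont := hu.continuous_fderiv one_ne_zero
  have Dv_cont := hv'.continuous
  have D2v_cont := hv'.continuous_fderiv one_ne_zero
  calc eLpNorm (fderiv ℝ fun x ↦ fderiv ℝ v x (u x)) r μ
      ≤ eLpNorm (fun x ↦ ‖fderiv ℝ v x‖ * ‖fderiv ℝ u x‖
          + ‖fderiv ℝ (fderiv ℝ v) x‖ * ‖u x‖) r μ :=
        eLpNorm_mono_real fun x ↦ norm_fderiv_fderiv_apply_le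
          (hu.differentiable one_ne_zero x) (hv'.differentiable one_ne_zero x)
    _ ≤ eLpNorm (fun x ↦ ‖fderiv ℝ v x‖ * ‖fderiv ℝ u x‖) r μ
          + eLpNorm (fun x ↦ ‖fderiv ℝ (fderiv ℝ v) x‖ * ‖u x‖) r μ :=
        eLpNorm_add_le (Dv_cont.norm.mul Du_cont.norm).aestronglyMeasurable
          (D2v_cont.norm.mul u_cont.norm).aestronglyMeasurable hr
    _ ≤ _ := by
        gcongr
        · simpa using eLpNorm_le_eLpNorm_mul_eLpNorm'_of_norm (p := p) (q := q) (r := r) (μ := μ)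
            Dv_cont.aestronglyMeasurable Du_cont.aestronglyMeasurable (fun A B ↦ ‖A‖ * ‖B‖) 1
            (.of_forall fun x ↦ by simp)
        · simpa using eLpNorm_le_eLpNorm_mul_eLpNorm_top (μ := μ) r
            D2v_cont.aestronglyMeasurable u (fun A y ↦ ‖A‖ * ‖y‖) 1 (.of_forall fun x ↦ by simp)

lemma holderTriple_four_four_two : ENNReal.HolderTriple 4 4 2 where
  inv_add_inv_eq_inv := by
    rw [← ENNReal.toReal_eq_toReal_iff' (by simp) (by simp), ENNReal.toReal_add (by simp) (by simp)]
    norm_num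

variable (F) [FiniteDimensional ℝ F] (μ : Measure E) [μ.IsAddHaarMeasure]

lemma exists_eLpNorm_six_le_eLpNorm_fderiv (hE : finrank ℝ E = 3) :
    ∃ S : ℝ≥0, ∀ f : E → F, ContDiff ℝ 1 f → HasCompactSupport f →
      eLpNorm f 6 μ ≤ S * eLpNorm (fderiv ℝ f) 2 μ :=
  ⟨SNormLESNormFDerivOfEqConst F μ 2, fun _ hf hfc ↦ by
    simpa using eLpNorm_le_eLpNorm_fderiv_of_eq (p' := 6) μ hf hfc (one_le_two (α := ℝ≥0))
      (by simp [hE]) (by norm_num [hE])⟩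

lemma exists_eLpNorm_four_le_eH1Norm (hE : finrank ℝ E = 3) :
    ∃ C : ℝ≥0, ∀ f : E → F, ContDiff ℝ 1 f → HasCompactSupport f →
      eLpNorm f 4 μ ≤ C * eH1Norm f μ := by
  obtain ⟨S, hS⟩ := exists_eLpNorm_six_le_eLpNorm_fderiv F μ hE
  refine ⟨max 1 S, fun f hf hfc ↦ ?_⟩
  calc eLpNorm f 4 μ ≤ max (eLpNorm f 2 μ) (eLpNorm f 6 μ) :=
        eLpNorm_le_max_of_le_of_le hf.continuous.aestronglyMeasurable (by simp) (by norm_num)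
          (by norm_num) (by simp)
    _ ≤ max (1 * eH1Norm f μ) (S * eH1Norm f μ) := by
        gcongr
        · rw [one_mul]
          exact eLpNorm_le_eH1Norm f μ
        · exact (hS f hf hfc).trans (by gcongr; exact eLpNorm_fderiv_le_eH1Norm f μ)
    _ = ↑(max 1 S) * eH1Norm f μ := by
        push_cast
        exact (max_mul_of_nonneg _ _ bot_le).symm

lemma exists_eLpNorm_top_le_eH1Norm_fderiv (hE : finrank ℝ E = 3) :
    ∃ C : ℝ≥0, ∀ f : E → F, ContDiff ℝ 2 f → HasCompactSupport f →
      eLpNorm f ∞ μ ≤ C * eH1Norm (fderiv ℝ f) μ := by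
  obtain ⟨S, hS⟩ := exists_eLpNorm_six_le_eLpNorm_fderiv F μ hE
  obtain ⟨S', hS'⟩ := exists_eLpNorm_six_le_eLpNorm_fderiv (E →L[ℝ] F) μ hE
  obtain ⟨M, hM⟩ := exists_enorm_le_eLpNorm_add_eLpNorm_fderiv (F := F) μ (p := 6)
    (by norm_num) (by simp) (by rw [hE]; norm_num)
  refine ⟨M * (S + S'), fun f hf hfc ↦ ?_⟩
  have hf1 : ContDiff ℝ 1 f := hf.of_le one_le_two
  rw [eLpNorm_exponent_top]
  refine eLpNormEssSup_le_of_ae_enorm_bound (.of_forall fun x ↦ ?_)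
  calc ‖f x‖ₑ ≤ M * (eLpNorm f 6 μ + eLpNorm (fderiv ℝ f) 6 μ) := hM f hf1 x
    _ ≤ M * (S * eH1Norm (fderiv ℝ f) μ + S' * eH1Norm (fderiv ℝ f) μ) := by
        gcongr
        · exact (hS f hf1 hfc).trans (by gcongr; exact eLpNorm_le_eH1Norm _ μ)
        · exact (hS' _ (hf.fderiv_right le_rfl) (hfc.fderiv ℝ)).trans
            (by gcongr; exact eLpNorm_fderiv_le_eH1Norm _ μ)
    _ = ↑(M * (S + S')) * eH1Norm (fderiv ℝ f) μ := by push_cast; ring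

theorem exists_eH1Norm_fderiv_apply_le (hE : finrank ℝ E = 3) :
    ∃ C : ℝ≥0, ∀ (u : E → E) (v : E → F), ContDiff ℝ 2 u → HasCompactSupport u →
      ContDiff ℝ 2 v → HasCompactSupport v →
      eH1Norm (fun x ↦ fderiv ℝ v x (u x)) μ
        ≤ C * (eH1Norm (fderiv ℝ u) μ * eH1Norm (fderiv ℝ v) μ) := by
  obtain ⟨M, hM⟩ := exists_eLpNorm_top_le_eH1Norm_fderiv E μ hE
  obtain ⟨K, hK⟩ := exists_eLpNorm_four_le_eH1Norm (E →L[ℝ] E) μ hE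
  obtain ⟨L, hL⟩ := exists_eLpNorm_four_le_eH1Norm (E →L[ℝ] F) μ hE
  refine ⟨M + L * K + M, fun u v hu huc hv hvc ↦ ?_⟩
  have := holderTriple_four_four_two
  have hDv : ContDiff ℝ 1 (fderiv ℝ v) := hv.fderiv_right le_rfl
  calc eH1Norm (fun x ↦ fderiv ℝ v x (u x)) μ
      ≤ eLpNorm (fderiv ℝ v) 2 μ * eLpNorm u ∞ μ
        + (eLpNorm (fderiv ℝ v) 4 μ * eLpNorm (fderiv ℝ u) 4 μ
          + eLpNorm (fderiv ℝ (fderiv ℝ v)) 2 μ * eLpNorm u ∞ μ) :=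
        add_le_add (eLpNorm_clm_apply_le hDv.continuous.aestronglyMeasurable u)
          (eLpNorm_fderiv_fderiv_apply_le one_le_two μ (hu.of_le one_le_two) hv)
    _ ≤ eH1Norm (fderiv ℝ v) μ * (M * eH1Norm (fderiv ℝ u) μ)
        + (L * eH1Norm (fderiv ℝ v) μ * (K * eH1Norm (fderiv ℝ u) μ)
          + eH1Norm (fderiv ℝ v) μ * (M * eH1Norm (fderiv ℝ u) μ)) := by
        gcongr
        · exact eLpNorm_le_eH1Norm _ μ
        · exact hM u hu huc
        · exact hL _ hDv (hvc.fderiv ℝ)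
        · exact hK _ (hu.fderiv_right le_rfl) (huc.fderiv ℝ)
        · exact eLpNorm_fderiv_le_eH1Norm _ μ
        · exact hM u hu huc
    _ = ↑(M + L * K + M) * (eH1Norm (fderiv ℝ u) μ * eH1Norm (fderiv ℝ v) μ) := by
        push_cast
        ring

end Convection

section Coordinates

lemma nnnorm_fderiv_le_of_antilipschitzWith {E F G : Type*} [NormedAddCommGroup E] [NormedSpace ℝ E]
    [NormedAddCommGroup F] [NormedSpace ℝ F] [NormedAddCommGroup G] [NormedSpace ℝ G]
    {A : F →L[ℝ] G} {K : ℝ≥0} (hA : AntilipschitzWith K A) {f : E → F} {x : E}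
    (hf : DifferentiableAt ℝ f x) : ‖fderiv ℝ f x‖₊ ≤ K * ‖fderiv ℝ (A ∘ f) x‖₊ := by
  refine ContinuousLinearMap.opNNNorm_le_bound _ _ fun y ↦ ?_
  calc ‖fderiv ℝ f x y‖₊ ≤ K * ‖A (fderiv ℝ f x y)‖₊ := hA.le_mul_nnnorm (map_zero A) _
    _ = K * ‖fderiv ℝ (A ∘ f) x y‖₊ := by
        rw [(A.hasFDerivAt.comp x hf.hasFDerivAt).fderiv]
        rfl
    _ ≤ K * ‖fderiv ℝ (A ∘ f) x‖₊ * ‖y‖₊ := by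
        rw [mul_assoc]
        gcongr
        exact ContinuousLinearMap.le_opNNNorm _ y

/-- The partial derivatives `∂ᵢ wⱼ` as a vector field indexed by pairs `(i, j)`, so that the iterate
`jacobian (jacobian w)` has the second derivatives `∂ᵢ ∂ⱼ wₖ` as its entries `(i, (j, k))`. -/
noncomputable def jacobian {ι : Type*} (w : (Fin 3 → ℝ) → ι → ℝ) (x : Fin 3 → ℝ) (p : Fin 3 × ι) :
    ℝ :=
  pd p.1 (fun y ↦ w y p.2) x

/-- The convection term `(u·∇)w`. -/
noncomputable def convection {ι : Type*} (u : (Fin 3 → ℝ) → Fin 3 → ℝ) (w : (Fin 3 → ℝ) → ι → ℝ)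
    (x : Fin 3 → ℝ) (j : ι) : ℝ :=
  ∑ k, u x k * pd k (fun y ↦ w y j) x

section PartialDerivatives

variable {ι : Type*} {w : (Fin 3 → ℝ) → ι → ℝ}

lemma hasCompactSupport_jacobian (hw : HasCompactSupport w) : HasCompactSupport (jacobian w) := by
  refine hw.mono' fun x hx ↦ not_imp_comm.1 (fun hx' ↦ ?_) hx
  rw [notMem_tsupport_iff_eventuallyEq] at hx'
  ext p
  have h : (fun y ↦ w y p.2) =ᶠ[nhds x] 0 := hx'.mono fun y hy ↦ congrFun hy p.2
  simp [jacobian, pd, h.fderiv_eq]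

lemma hasCompactSupport_convection {u : (Fin 3 → ℝ) → Fin 3 → ℝ} (hu : HasCompactSupport u) :
    HasCompactSupport (convection u w) := by
  refine hu.mono fun x hx hux ↦ hx ?_
  ext j
  simp [convection, hux]

variable [Finite ι]

lemma pd_apply {x : Fin 3 → ℝ} (hw : DifferentiableAt ℝ w x) (i : Fin 3) (j : ι) :
    pd i (fun y ↦ w y j) x = fderiv ℝ w x (Pi.single i 1) j := by
  have := Fintype.ofFinite ι
  rw [pd, fderiv_apply hw]
  rfl

lemma convection_eq_fderiv_apply (u : (Fin 3 → ℝ) → Fin 3 → ℝ) (hw : Differentiable ℝ w) :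
    convection u w = fun x ↦ fderiv ℝ w x (u x) := by
  ext x j
  conv_rhs => rw [pi_eq_sum_univ' (u x)]
  simp [convection, pd_apply (hw x)]

end PartialDerivatives

variable {ι : Type*} [Fintype ι]

section L2Norm

/-- The norm `(∑ᵢ ‖wᵢ‖²_{L²})^{1/2}` of a vector field with components `wᵢ`. -/
noncomputable def l2Norm {α : Type*} [MeasureSpace α] (w : α → ι → ℝ) : ℝ :=
  √(∑ i, ∫ x, w x i ^ 2)

variable {α : Type*} [MeasureSpace α] {w : α → ι → ℝ}

lemma ofReal_l2Norm (hw : MemLp w 2) :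
    ENNReal.ofReal (l2Norm w) = eLpNorm (fun x ↦ WithLp.toLp 2 (w x)) 2 volume := by
  have hw' : MemLp (fun x ↦ WithLp.toLp 2 (w x)) 2 volume :=
    (PiLp.continuousLinearEquiv 2 ℝ fun _ : ι ↦ ℝ).symm.toContinuousLinearMap.comp_memLp' hw
  rw [hw'.eLpNorm_eq_integral_rpow_norm two_ne_zero (by simp), l2Norm,
    Real.sqrt_eq_rpow, ← integral_finsetSum _ fun i _ ↦ (hw.eval i).integrable_sq]
  simp [EuclideanSpace.norm_sq_eq]

lemma eLpNorm_le_ofReal_l2Norm (hw : MemLp w 2) :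
    eLpNorm w 2 volume ≤ ENNReal.ofReal (l2Norm w) := by
  rw [ofReal_l2Norm hw]
  refine eLpNorm_mono fun x ↦ ?_
  simpa using (PiLp.lipschitzWith_ofLp 2 fun _ : ι ↦ ℝ).norm_le_mul rfl (WithLp.toLp 2 (w x))

lemma ofReal_l2Norm_le (hw : MemLp w 2) :
    ENNReal.ofReal (l2Norm w) ≤ NNReal.sqrt (Fintype.card ι) * eLpNorm w 2 volume := by
  rw [ofReal_l2Norm hw]
  refine eLpNorm_le_nnreal_smul_eLpNorm_of_ae_le_mul (.of_forall fun x ↦ ?_) 2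
  simpa [NNReal.sqrt_eq_rpow] using
    (PiLp.lipschitzWith_toLp 2 fun _ : ι ↦ ℝ).nnorm_le_mul rfl (w x)

end L2Norm

variable (ι) in
/-- The matrix of a linear map `ℝ³ → ℝ^ι`, with the entries indexed as in `jacobian`. -/
noncomputable def matrixEntries : ((Fin 3 → ℝ) →L[ℝ] ι → ℝ) →L[ℝ] Fin 3 × ι → ℝ :=
  .pi fun p ↦ (ContinuousLinearMap.proj p.2).comp (.apply ℝ (ι → ℝ) (Pi.single p.1 1))

variable (ι) in
lemma exists_antilipschitzWith_matrixEntries : ∃ K, AntilipschitzWith K (matrixEntries ι) := by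
  obtain ⟨K, -, hK⟩ := (matrixEntries ι).toLinearMap.exists_antilipschitzWith <| by
    refine LinearMap.ker_eq_bot'.2 fun L hL ↦ ContinuousLinearMap.coe_injective ?_
    refine LinearMap.pi_ext' fun i ↦ LinearMap.ext_ring ?_
    ext j
    exact congrFun hL (i, j)
  exact ⟨K, hK⟩

variable {w : (Fin 3 → ℝ) → ι → ℝ}

lemma jacobian_eq_matrixEntries_comp_fderiv (hw : Differentiable ℝ w) :
    jacobian w = matrixEntries ι ∘ fderiv ℝ w := by
  ext x p
  exact pd_apply (hw x) p.1 p.2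

lemma contDiff_jacobian {n : ℕ} (hw : ContDiff ℝ (n + 1) w) : ContDiff ℝ n (jacobian w) := by
  rw [jacobian_eq_matrixEntries_comp_fderiv (hw.differentiable (by simp))]
  exact (matrixEntries ι).contDiff.comp (hw.fderiv_right le_rfl)

lemma contDiff_convection {n : ℕ} {u : (Fin 3 → ℝ) → Fin 3 → ℝ} (hu : ContDiff ℝ n u)
    (hw : ContDiff ℝ (n + 1) w) : ContDiff ℝ n (convection u w) := by
  rw [convection_eq_fderiv_apply u (hw.differentiable (by simp))]
  exact (hw.fderiv_right le_rfl).clm_apply hu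

lemma memLp_jacobian {p : ℝ≥0∞} (hw : ContDiff ℝ 1 w) (hwc : HasCompactSupport w) :
    MemLp (jacobian w) p :=
  (contDiff_jacobian (n := 0) (by simpa using hw)).continuous.memLp_of_hasCompactSupport
    (hasCompactSupport_jacobian hwc)

lemma ofReal_l2Norm_jacobian_le (hw : ContDiff ℝ 1 w) (hwc : HasCompactSupport w) :
    ENNReal.ofReal (l2Norm (jacobian w))
      ≤ NNReal.sqrt (Fintype.card (Fin 3 × ι)) * ‖matrixEntries ι‖₊
        * eLpNorm (fderiv ℝ w) 2 volume := by
  rw [mul_assoc]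
  refine (ofReal_l2Norm_le (memLp_jacobian hw hwc)).trans ?_
  gcongr
  rw [jacobian_eq_matrixEntries_comp_fderiv (hw.differentiable one_ne_zero)]
  exact eLpNorm_le_nnreal_smul_eLpNorm_of_ae_le_mul
    (.of_forall fun x ↦ (matrixEntries ι).le_opNNNorm _) 2

lemma eLpNorm_fderiv_le_ofReal_l2Norm_jacobian {K : ℝ≥0}
    (hK : AntilipschitzWith K (matrixEntries ι)) (hw : ContDiff ℝ 1 w)
    (hwc : HasCompactSupport w) :
    eLpNorm (fderiv ℝ w) 2 volume ≤ K * ENNReal.ofReal (l2Norm (jacobian w)) := by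
  refine le_trans ?_ (mul_le_mul_right (eLpNorm_le_ofReal_l2Norm (memLp_jacobian hw hwc)) _)
  rw [jacobian_eq_matrixEntries_comp_fderiv (hw.differentiable one_ne_zero)]
  exact eLpNorm_le_nnreal_smul_eLpNorm_of_ae_le_mul
    (.of_forall fun x ↦ hK.le_mul_nnnorm (map_zero _) _) 2

lemma eLpNorm_fderiv_fderiv_le_eLpNorm_fderiv_jacobian {K : ℝ≥0}
    (hK : AntilipschitzWith K (matrixEntries ι)) (hw : ContDiff ℝ 2 w) {p : ℝ≥0∞} :
    eLpNorm (fderiv ℝ (fderiv ℝ w)) p volume ≤ K * eLpNorm (fderiv ℝ (jacobian w)) p volume := by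
  rw [jacobian_eq_matrixEntries_comp_fderiv (hw.differentiable two_ne_zero)]
  have hDw : ContDiff ℝ 1 (fderiv ℝ w) := hw.fderiv_right le_rfl
  exact eLpNorm_le_nnreal_smul_eLpNorm_of_ae_le_mul (.of_forall fun x ↦
    nnnorm_fderiv_le_of_antilipschitzWith hK (hDw.differentiable one_ne_zero x)) p

/-- The norm `‖w‖_{L²} + ‖∇w‖_{L²}` of a vector field on `ℝ³`, computed from the entries of `w` and
of `jacobian w`. -/
noncomputable def h1Norm (w : (Fin 3 → ℝ) → ι → ℝ) : ℝ :=
  l2Norm w + l2Norm (jacobian w)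

lemma h1Norm_nonneg (w : (Fin 3 → ℝ) → ι → ℝ) : 0 ≤ h1Norm w :=
  add_nonneg (Real.sqrt_nonneg _) (Real.sqrt_nonneg _)

lemma ofReal_h1Norm (w : (Fin 3 → ℝ) → ι → ℝ) : ENNReal.ofReal (h1Norm w)
    = ENNReal.ofReal (l2Norm w) + ENNReal.ofReal (l2Norm (jacobian w)) :=
  ENNReal.ofReal_add (Real.sqrt_nonneg _) (Real.sqrt_nonneg _)

variable (ι) in
lemma exists_ofReal_h1Norm_le_eH1Norm :
    ∃ L : ℝ≥0, ∀ w : (Fin 3 → ℝ) → ι → ℝ, ContDiff ℝ 1 w → HasCompactSupport w →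
      ENNReal.ofReal (h1Norm w) ≤ L * eH1Norm w volume := by
  refine ⟨NNReal.sqrt (Fintype.card ι)
    + NNReal.sqrt (Fintype.card (Fin 3 × ι)) * ‖matrixEntries ι‖₊, fun w hw hwc ↦ ?_⟩
  rw [ofReal_h1Norm, ENNReal.coe_add, ENNReal.coe_mul, add_mul]
  refine add_le_add ((ofReal_l2Norm_le (hw.continuous.memLp_of_hasCompactSupport hwc)).trans ?_)
    ((ofReal_l2Norm_jacobian_le hw hwc).trans ?_)
  · gcongr
    exact eLpNorm_le_eH1Norm w volume
  · gcongr
    exact eLpNorm_fderiv_le_eH1Norm w volume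

variable (ι) in
lemma exists_eH1Norm_fderiv_le_ofReal_h1Norm_jacobian :
    ∃ K : ℝ≥0, ∀ w : (Fin 3 → ℝ) → ι → ℝ, ContDiff ℝ 2 w → HasCompactSupport w →
      eH1Norm (fderiv ℝ w) volume ≤ K * ENNReal.ofReal (h1Norm (jacobian w)) := by
  obtain ⟨K, hK⟩ := exists_antilipschitzWith_matrixEntries ι
  obtain ⟨K', hK'⟩ := exists_antilipschitzWith_matrixEntries (Fin 3 × ι)
  refine ⟨K + K * K', fun w hw hwc ↦ ?_⟩
  rw [ofReal_h1Norm]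
  set a := ENNReal.ofReal (l2Norm (jacobian w))
  set b := ENNReal.ofReal (l2Norm (jacobian (jacobian w)))
  have hJw : ContDiff ℝ 1 (jacobian w) := contDiff_jacobian (n := 1) hw
  calc eH1Norm (fderiv ℝ w) volume
      ≤ K * a + K * eLpNorm (fderiv ℝ (jacobian w)) 2 volume :=
        add_le_add (eLpNorm_fderiv_le_ofReal_l2Norm_jacobian hK (hw.of_le one_le_two) hwc)
          (eLpNorm_fderiv_fderiv_le_eLpNorm_fderiv_jacobian hK hw)
    _ ≤ K * a + K * (K' * b) := by
        gcongr
        exact eLpNorm_fderiv_le_ofReal_l2Norm_jacobian hK' hJw (hasCompactSupport_jacobian hwc)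
    _ ≤ K * a + K * (K' * b) + (K * b + K * (K' * a)) := le_self_add
    _ = ↑(K + K * K') * (a + b) := by push_cast; ring

theorem convection_H1_estimate_general :
    ∃ C : ℝ, 0 < C ∧ ∀ (u : (Fin 3 → ℝ) → Fin 3 → ℝ) (v : (Fin 3 → ℝ) → ι → ℝ),
      ContDiff ℝ 2 u → HasCompactSupport u → ContDiff ℝ 2 v → HasCompactSupport v →
      h1Norm (convection u v) ≤ C * (h1Norm (jacobian u) * h1Norm (jacobian v)) := by
  obtain ⟨A, hA⟩ := exists_eH1Norm_fderiv_apply_le (ι → ℝ) (volume : Measure (Fin 3 → ℝ)) (by simp)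
  obtain ⟨K, hK⟩ := exists_eH1Norm_fderiv_le_ofReal_h1Norm_jacobian (Fin 3)
  obtain ⟨K', hK'⟩ := exists_eH1Norm_fderiv_le_ofReal_h1Norm_jacobian ι
  obtain ⟨L, hL⟩ := exists_ofReal_h1Norm_le_eH1Norm ι
  refine ⟨L * (A * (K * K')) + 1, by positivity, fun u v hu huc hv hvc ↦ ?_⟩
  have h_convection : ContDiff ℝ 1 (convection u v) :=
    contDiff_convection (n := 1) (hu.of_le one_le_two) hv
  have rhs_nonneg : 0 ≤ h1Norm (jacobian u) * h1Norm (jacobian v) :=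
    mul_nonneg (h1Norm_nonneg _) (h1Norm_nonneg _)
  rw [← ENNReal.ofReal_le_ofReal_iff (by positivity)]
  calc ENNReal.ofReal (h1Norm (convection u v))
      ≤ L * eH1Norm (convection u v) volume := hL _ h_convection (hasCompactSupport_convection huc)
    _ ≤ L * (A * (eH1Norm (fderiv ℝ u) volume * eH1Norm (fderiv ℝ v) volume)) := by
        rw [convection_eq_fderiv_apply u (hv.differentiable two_ne_zero)]
        gcongr
        exact hA u v hu huc hv hvc
    _ ≤ L * (A * (K * ENNReal.ofReal (h1Norm (jacobian u))
          * (K' * ENNReal.ofReal (h1Norm (jacobian v))))) := by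
        gcongr
        · exact hK u hu huc
        · exact hK' v hv hvc
    _ = ENNReal.ofReal (L * (A * (K * K')) * (h1Norm (jacobian u) * h1Norm (jacobian v))) := by
        rw [ENNReal.ofReal_mul (by positivity), ENNReal.ofReal_mul (h1Norm_nonneg _)]
        simp only [← NNReal.coe_mul, ENNReal.ofReal_coe_nnreal, ENNReal.coe_mul]
        ring
    _ ≤ ENNReal.ofReal _ := by
        gcongr
        exact le_add_of_nonneg_right zero_le_one

end Coordinates

/-- Nonlinear product estimate `‖(u·∇)u‖_{H¹} ≤ C ‖∇u‖_{H¹}²`: there is `C > 0` such that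
for every smooth compactly supported `u : ℝ³ → ℝ³`,
`‖(u·∇)u‖_{L²} + ‖∇((u·∇)u)‖_{L²} ≤ C (‖∇u‖_{L²} + ‖∇²u‖_{L²})²`. -/
theorem convection_H1_estimate :
    ∃ C : ℝ, 0 < C ∧ ∀ u : (Fin 3 → ℝ) → (Fin 3 → ℝ),
      ContDiff ℝ (⊤ : ℕ∞) u → HasCompactSupport u →
      Real.sqrt (∑ j : Fin 3, ∫ x : Fin 3 → ℝ,
          (∑ k : Fin 3, u x k * pd k (fun y => u y j) x) ^ 2)
        + Real.sqrt (∑ i : Fin 3, ∑ j : Fin 3, ∫ x : Fin 3 → ℝ,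
            (pd i (fun y => ∑ k : Fin 3, u y k * pd k (fun z => u z j) y) x) ^ 2)
      ≤ C * (Real.sqrt (∑ i : Fin 3, ∑ j : Fin 3, ∫ x : Fin 3 → ℝ,
              (pd i (fun y => u y j) x) ^ 2)
            + Real.sqrt (∑ i : Fin 3, ∑ j : Fin 3, ∑ k : Fin 3, ∫ x : Fin 3 → ℝ,
              (pd i (pd j (fun y => u y k)) x) ^ 2)) ^ 2 := by
  obtain ⟨C, hC, h⟩ := convection_H1_estimate_general (ι := Fin 3)
  refine ⟨C, hC, fun u hu huc ↦ ?_⟩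
  have hu2 : ContDiff ℝ 2 u := contDiff_infty.1 hu 2
  simpa [h1Norm, l2Norm, jacobian, convection, Fintype.sum_prod_type, ← sq]
    using h u u hu2 huc hu2 huc
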